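/- arXiv:math/0002030 — 2 statements merged into one kernel-verified Lean document; each statement's English description precedes it below -/
import Mathlib

section
/- Let V be a finite-dimensional complex vector space and N : V → V a nonzero nilpotent endomorphism. Then there exists a unique increasing filtration W(N)_{-k} ⊆ ... ⊆ W(N)_k = V (the monodromy weight filtration) such that N maps W(N)_j into W(N)_{j-2} for each j, and the induced maps N^j : Gr^{W(N)}_j → Gr^{W(N)}_{-j} are isomorphisms for all j ≥ 0. -/
variable {V : Type*} [AddCommGroup V] [Module ℂ V]

/-- The defining properties of the monodromy weight filtration of a nilpotent
endomorphism: an increasing, bounded (exhaustive and separated) filtration such that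
`N` maps `W j` into `W (j-2)` and the induced maps
`N^j : Gr_j → Gr_{-j}` are isomorphisms (expressed here as injectivity and
surjectivity on graded pieces). -/
def IsMonodromyWeightFiltration (N : Module.End ℂ V) (W : ℤ → Submodule ℂ V) : Prop :=
  Monotone W ∧
  (∃ d : ℕ, (∀ j : ℤ, j < -(d : ℤ) → W j = ⊥) ∧ (∀ j : ℤ, (d : ℤ) ≤ j → W j = ⊤)) ∧
  (∀ j : ℤ, (W j).map N ≤ W (j - 2)) ∧
  (∀ j : ℕ, ∀ v ∈ W (j : ℤ), (N ^ j) v ∈ W (-(j : ℤ) - 1) → v ∈ W ((j : ℤ) - 1)) ∧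
  (∀ j : ℕ, ∀ v ∈ W (-(j : ℤ)), ∃ u ∈ W (j : ℤ), (N ^ j) u - v ∈ W (-(j : ℤ) - 1))

section Aux

/-- The explicit filtration. -/
def mwf (N : Module.End ℂ V) (k : ℤ) : Submodule ℂ V :=
  ⨆ i : ℕ, LinearMap.ker (N ^ (i + 1)) ⊓ LinearMap.range (N ^ ((i : ℤ) - k).toNat)

theorem mwf_mem (N : Module.End ℂ V) (k : ℤ) (i a : ℕ) (y : V) (ha : (i : ℤ) - k ≤ a)
    (h : (N ^ (i + 1 + a)) y = 0) : (N ^ a) y ∈ mwf N k := by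
  refine Submodule.mem_iSup_of_mem i ⟨?_, ?_⟩
  · simpa [pow_add, Module.End.mul_apply] using h
  · refine ⟨(N ^ (a - ((i : ℤ) - k).toNat)) y, ?_⟩
    rw [← Module.End.mul_apply, ← pow_add]
    congr 2
    omega

theorem mwf_lift (N : Module.End ℂ V) (l : ℤ) (j : ℕ) (hl : l ≤ -(j : ℤ)) :
    mwf N l ≤ (mwf N (l + 2 * j)).map (N ^ j) := by
  refine iSup_le fun i => ?_
  rintro _ ⟨h, y, rfl⟩
  obtain ⟨b, hb⟩ : ∃ b : ℕ, ((i : ℤ) - l).toNat = j + b := ⟨((i : ℤ) - l).toNat - j, by omega⟩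
  rw [hb] at h ⊢
  refine ⟨(N ^ b) y, ?_, by rw [pow_add, Module.End.mul_apply]⟩
  refine mwf_mem N _ (i + j) b y (by push_cast; omega) ?_
  have h' : (N ^ (i + 1)) ((N ^ (j + b)) y) = 0 := h
  rw [← Module.End.mul_apply, ← pow_add] at h'
  rw [← h']
  congr 2
  omega

theorem mwf_isMWF (N : Module.End ℂ V) (hnil : IsNilpotent N) :
    IsMonodromyWeightFiltration N (mwf N) := by
  obtain ⟨n, hn⟩ := hnil
  have hz : ∀ m, n ≤ m → N ^ m = 0 := fun m hm => pow_eq_zero_of_le hm hn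
  have hmono : Monotone (mwf N) := by
    intro k l hkl
    refine iSup_le fun i => ?_
    rintro _ ⟨h, y, rfl⟩
    refine mwf_mem N l i _ y (by omega) ?_
    rw [pow_add, Module.End.mul_apply]
    exact h
  refine ⟨hmono, ⟨n, ?_, ?_⟩, ?_, ?_, ?_⟩
  · intro j hj
    refine le_bot_iff.1 (iSup_le fun i => ?_)
    rintro _ ⟨h, y, rfl⟩
    rw [hz _ (by omega)]
    simp
  · intro j hj
    refine top_le_iff.1 fun v _ => ?_
    exact mwf_mem N j n 0 v (by push_cast; omega) (by rw [hz _ (by omega)]; simp)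
  · intro j
    rw [Submodule.map_le_iff_le_comap]
    refine iSup_le fun i => ?_
    rintro _ ⟨h, y, rfl⟩
    have h' : (N ^ (i + 1)) ((N ^ ((i : ℤ) - j).toNat) y) = 0 := h
    rw [Submodule.mem_comap]
    rcases i with _ | i
    · rw [zero_add, pow_one] at h'
      rw [h']
      exact Submodule.zero_mem _
    · rw [← Module.End.mul_apply, ← pow_succ']
      refine mwf_mem N _ i _ y (by push_cast; omega) ?_
      rw [← Module.End.mul_apply, ← pow_add] at h'
      rw [← h']
      congr 2
      omega
  · intro j v hv h
    rcases j with _ | j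
    · simpa using h
    · obtain ⟨u, hu, hu'⟩ := mwf_lift N _ (j + 1) (by omega) h
      have e : (-((j + 1 : ℕ) : ℤ) - 1 + 2 * ((j + 1 : ℕ) : ℤ)) = ((j + 1 : ℕ) : ℤ) - 1 := by ring
      rw [e] at hu
      have : v - u ∈ mwf N (((j + 1 : ℕ) : ℤ) - 1) :=
        mwf_mem N _ j 0 (v - u) (by push_cast; omega) (by simp [map_sub, hu'])
      simpa using Submodule.add_mem _ this hu
  · intro j v hv
    obtain ⟨u, hu, hu'⟩ := mwf_lift N _ j le_rfl hv
    refine ⟨u, ?_, by rw [hu', sub_self]; exact Submodule.zero_mem _⟩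
    have e : (-(j : ℤ) + 2 * (j : ℤ)) = j := by ring
    rwa [e] at hu

theorem IsMonodromyWeightFiltration.pow_mem {N : Module.End ℂ V} {W : ℤ → Submodule ℂ V}
    (h : IsMonodromyWeightFiltration N W) (m : ℕ) {k l : ℤ} (hkl : k - 2 * m ≤ l) {v : V}
    (hv : v ∈ W k) : (N ^ m) v ∈ W l := by
  refine h.1 hkl ?_
  clear hkl
  induction m with
  | zero => simpa using hv
  | succ m ih =>
    rw [pow_succ', Module.End.mul_apply]
    have := h.2.2.1 _ (Submodule.mem_map_of_mem ih)
    convert this using 2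
    push_cast
    ring

theorem IsMonodromyWeightFiltration.eq_comap {N : Module.End ℂ V} {W : ℤ → Submodule ℂ V}
    (h : IsMonodromyWeightFiltration N W) (j : ℕ) :
    W ((j : ℤ) - 1) = (W (-(j : ℤ) - 1)).comap (N ^ j) := by
  refine le_antisymm (fun v hv => h.pow_mem j (by omega) hv) ?_
  intro v hv
  rw [Submodule.mem_comap] at hv
  obtain ⟨d, -, hd⟩ := h.2.1
  have key : ∀ a : ℕ, v ∈ W ((j : ℤ) - 1 + a) → v ∈ W ((j : ℤ) - 1) := by
    intro a
    induction a with
    | zero => simp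
    | succ a ih =>
      intro hva
      apply ih
      have e : ((j : ℤ) - 1 + a) = ((j + a : ℕ) : ℤ) - 1 := by push_cast; ring
      rw [e]
      refine h.2.2.2.1 (j + a) v (by convert hva using 2; push_cast; ring) ?_
      rw [add_comm j a, pow_add, Module.End.mul_apply]
      exact h.pow_mem a (by push_cast; omega) hv
  refine key (d + 1) ?_
  rw [hd _ (by push_cast; omega)]
  trivial

theorem IsMonodromyWeightFiltration.eq_map {N : Module.End ℂ V} {W : ℤ → Submodule ℂ V}
    (h : IsMonodromyWeightFiltration N W) (j : ℕ) :
    W (-(j : ℤ)) = (W (j : ℤ)).map (N ^ j) := by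
  refine le_antisymm ?_ (Submodule.map_le_iff_le_comap.2 fun v hv => h.pow_mem j (by omega) hv)
  obtain ⟨d, hd, -⟩ := h.2.1
  have key : ∀ a j : ℕ, d + 1 ≤ j + a → W (-(j : ℤ)) ≤ (W (j : ℤ)).map (N ^ j) := by
    intro a
    induction a with
    | zero =>
      intro j hj
      rw [hd _ (by omega)]
      exact bot_le
    | succ a ih =>
      intro j hj v hv
      obtain ⟨u, hu, huv⟩ := h.2.2.2.2 j v hv
      have e : -(j : ℤ) - 1 = -((j + 1 : ℕ) : ℤ) := by push_cast; ring
      rw [e] at huv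
      obtain ⟨w, hw, hw'⟩ := ih (j + 1) (by omega) huv
      refine ⟨u - N w, Submodule.sub_mem _ hu ?_, ?_⟩
      · have := h.pow_mem 1 (l := (j : ℤ)) (by push_cast; omega) hw
        simpa using this
      · rw [map_sub, ← Module.End.mul_apply, ← pow_succ, hw']
        abel
  exact key (d + 1) j (by omega)

theorem IsMonodromyWeightFiltration.unique {N : Module.End ℂ V} {W W' : ℤ → Submodule ℂ V}
    (h : IsMonodromyWeightFiltration N W) (h' : IsMonodromyWeightFiltration N W') : W = W' := by
  obtain ⟨d, hb, ht⟩ := h.2.1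
  obtain ⟨d', hb', ht'⟩ := h'.2.1
  have key : ∀ a j : ℕ, d + d' ≤ j + a →
      W (j : ℤ) = W' (j : ℤ) ∧ W (-(j : ℤ) - 1) = W' (-(j : ℤ) - 1) := by
    intro a
    induction a with
    | zero =>
      intro j hj
      rw [ht _ (by omega), ht' _ (by omega), hb _ (by omega), hb' _ (by omega)]
      exact ⟨rfl, rfl⟩
    | succ a ih =>
      intro j hj
      obtain ⟨h1, h2⟩ := ih (j + 1) (by omega)
      have e1 : (j : ℤ) = ((j + 1 : ℕ) : ℤ) - 1 := by push_cast; ring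
      have e2 : -(j : ℤ) - 1 = -((j + 1 : ℕ) : ℤ) := by push_cast; ring
      rw [e2, h.eq_map, h'.eq_map, h1, e1, h.eq_comap, h'.eq_comap, h2]
      exact ⟨rfl, rfl⟩
  funext k
  rcases le_or_gt 0 k with hk | hk
  · have := (key (d + d') k.toNat (by omega)).1
    rwa [Int.toNat_of_nonneg hk] at this
  · have := (key (d + d') (-k - 1).toNat (by omega)).2
    rw [Int.toNat_of_nonneg (by omega)] at this
    convert this using 2 <;> ring

end Aux

/-- Existence and uniqueness of the monodromy weight filtration. -/
theorem monodromy_weight_filtration_existsUnique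
    [FiniteDimensional ℂ V] (N : Module.End ℂ V)
    (hnil : IsNilpotent N) (hne : N ≠ 0) :
    ∃! W : ℤ → Submodule ℂ V, IsMonodromyWeightFiltration N W := by
  exact ⟨mwf N, mwf_isMWF N hnil, fun W hW => hW.unique (mwf_isMWF N hnil)⟩
end

section
/- Let N be a nonzero nilpotent endomorphism of a finite-dimensional complex vector space V. There is a bijection between the set of gradings H of the monodromy weight filtration W(N) satisfying [H, N] = -2N and the set of Lie algebra representations ρ : sl₂(ℂ) → End(V) with ρ(n₋) = N. -/
variable {V : Type*} [AddCommGroup V] [Module ℂ V]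

/-- A grading of an increasing filtration `W`: a semisimple endomorphism whose
`k`-eigenspace splits `W k` over `W (k-1)`. -/
def IsGrading (Y : Module.End ℂ V) (W : ℤ → Submodule ℂ V) : Prop :=
  ∀ k : ℤ, W k = Module.End.eigenspace Y (k : ℂ) ⊔ W (k - 1) ∧
    Module.End.eigenspace Y (k : ℂ) ⊓ W (k - 1) = ⊥

theorem mwf_ker {N : Module.End ℂ V} {W : ℤ → Submodule ℂ V}
    (hW : IsMonodromyWeightFiltration N W) (j : ℕ) (v : V) (hv : (N ^ j) v = 0) :
    v ∈ W ((j : ℤ) - 1) := by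
  obtain ⟨hm, ⟨d, hb, ht⟩, hN, hi, hs⟩ := hW
  have key : ∀ n : ℕ, v ∈ W ((j : ℤ) - 1 + n) → v ∈ W ((j : ℤ) - 1) := by
    intro n
    induction n with
    | zero => intro h; simpa using h
    | succ n ih =>
      intro h
      apply ih
      have h1 := hi (j + n) v (by convert h using 2; push_cast; ring) (by
        rw [add_comm, pow_add, Module.End.mul_apply, hv, map_zero]; exact Submodule.zero_mem _)
      convert h1 using 2; push_cast; ring
  apply key (d + 1)
  rw [ht _ (by push_cast; linarith)]
  trivial

theorem mwf_pow {N : Module.End ℂ V} {W : ℤ → Submodule ℂ V}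
    (hW : IsMonodromyWeightFiltration N W) (m : ℕ) (k l : ℤ) (hl : l = k - 2 * m) (v : V)
    (hv : v ∈ W k) : (N ^ m) v ∈ W l := by
  subst hl
  induction m with
  | zero => simpa using hv
  | succ m ih =>
    rw [pow_succ', Module.End.mul_apply]
    have := hW.2.2.1 _ (Submodule.mem_map_of_mem ih)
    convert this using 2; push_cast; ring

theorem mwf_one {N : Module.End ℂ V} {W : ℤ → Submodule ℂ V}
    (hW : IsMonodromyWeightFiltration N W) (k l : ℤ) (hl : l = k - 2) (v : V)
    (hv : v ∈ W k) : N v ∈ W l := by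
  simpa using mwf_pow hW 1 k l (by simpa using hl) v hv

theorem mwf_neg {N : Module.End ℂ V} {W : ℤ → Submodule ℂ V}
    (hW : IsMonodromyWeightFiltration N W) (m : ℕ) (x : V) (hx : x ∈ W (-(m : ℤ))) :
    ∃ u ∈ W (m : ℤ), (N ^ m) u = x := by
  have hW' := hW
  obtain ⟨hm, ⟨d, hb, ht⟩, hN, hi, hs⟩ := hW'
  have key : ∀ n : ℕ, ∀ m : ℕ, d + 1 ≤ m + n → ∀ x ∈ W (-(m : ℤ)),
      ∃ u ∈ W (m : ℤ), (N ^ m) u = x := by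
    intro n
    induction n with
    | zero =>
      intro m hmn x hx
      rw [hb _ (by omega)] at hx
      exact ⟨0, Submodule.zero_mem _, by rw [map_zero]; exact ((Submodule.mem_bot ℂ).1 hx).symm⟩
    | succ n ih =>
      intro m hmn x hx
      obtain ⟨u, hu, h⟩ := hs m x hx
      obtain ⟨u', hu', h'⟩ := ih (m + 1) (by omega) ((N ^ m) u - x)
        (by convert h using 2; push_cast; ring)
      refine ⟨u - N u', Submodule.sub_mem _ hu (hm (by omega : (m : ℤ) - 1 ≤ m)
        (mwf_one hW _ _ (by push_cast; ring) _ hu')), ?_⟩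
      rw [pow_succ, Module.End.mul_apply] at h'
      rw [map_sub, h']; abel
  exact key (d + 1) m (by omega) x hx

theorem mwf_prim {N : Module.End ℂ V} {W : ℤ → Submodule ℂ V}
    (hW : IsMonodromyWeightFiltration N W) (k : ℕ) (x : V) (hx : x ∈ W (k : ℤ)) :
    ∃ y ∈ W ((k : ℤ) + 2), (N ^ (k + 1)) (x - N y) = 0 := by
  obtain ⟨y, hy, h⟩ := mwf_neg hW (k + 2) ((N ^ (k + 1)) x)
    (mwf_pow hW (k + 1) k _ (by push_cast; ring) x hx)
  refine ⟨y, by exact_mod_cast hy, ?_⟩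
  rw [map_sub, ← h, pow_succ, Module.End.mul_apply, sub_self]

/-- Induction principle: a shifted operator compatible with `N` moves `W` as prescribed. -/
theorem mwf_ind {N : Module.End ℂ V} {W : ℤ → Submodule ℂ V}
    (hW : IsMonodromyWeightFiltration N W) (T : ℤ → Module.End ℂ V) (c : ℕ)
    (hT : ∀ k v, T k (N v) = N (T (k + 2) v))
    (hk : ∀ k : ℕ, ∀ a, (N ^ (k + 1)) a = 0 → T k a ∈ W ((k : ℤ) - c))
    (k : ℤ) (x : V) (hx : x ∈ W k) : T k x ∈ W (k - c) := by
  obtain ⟨d, hb, ht⟩ := hW.2.1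
  have pos : ∀ n : ℕ, ∀ k : ℕ, d + c ≤ k + n → ∀ x ∈ W (k : ℤ), T k x ∈ W ((k : ℤ) - c) := by
    intro n
    induction n with
    | zero =>
      intro k hkn x hx
      rw [ht _ (by omega)]; trivial
    | succ n ih =>
      intro k hkn x hx
      obtain ⟨y, hy, h⟩ := mwf_prim hW k x hx
      have h1 := hk k _ h
      have h2 := ih (k + 2) (by omega) y (by exact_mod_cast hy)
      have h3 := mwf_one hW _ ((k : ℤ) - c) (by push_cast; ring) _ h2
      push_cast at h3
      rw [← hT, map_sub] at *
      simpa using Submodule.add_mem _ h1 h3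
  have hpow : ∀ m : ℕ, ∀ k v, T k ((N ^ m) v) = (N ^ m) (T (k + 2 * m) v) := by
    intro m
    induction m with
    | zero => intro k v; simp
    | succ m ih =>
      intro k v
      rw [pow_succ', Module.End.mul_apply, hT, ih, Module.End.mul_apply]
      congr 4; push_cast; ring
  rcases le_total 0 k with h | h
  · obtain ⟨n, rfl⟩ := Int.eq_ofNat_of_zero_le h
    exact pos (d + c) n (by omega) x hx
  · obtain ⟨m, hm⟩ := Int.eq_ofNat_of_zero_le (by omega : 0 ≤ -k)
    obtain rfl : k = -(m : ℤ) := by omega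
    obtain ⟨u, hu, rfl⟩ := mwf_neg hW m x hx
    rw [hpow]
    have := pos (d + c) m (by omega) u hu
    refine mwf_pow hW m ((m : ℤ) - c) _ (by ring) _ ?_
    convert this using 3; ring

theorem comm_pow {N H : Module.End ℂ V} (h : ∀ v, H (N v) = N (H v) - (2 : ℂ) • N v) (m : ℕ)
    (v : V) : H ((N ^ m) v) = (N ^ m) (H v) - (2 * m : ℂ) • (N ^ m) v := by
  induction m with
  | zero => simp
  | succ m ih =>
    simp only [pow_succ', Module.End.mul_apply, h, ih, map_sub, map_smul]
    push_cast; module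

theorem comm_P_pow {N H P : Module.End ℂ V} (h : ∀ v, H (N v) = N (H v) - (2 : ℂ) • N v)
    (hP : ∀ v, P (N v) = N (P v) + H v) (m : ℕ) (v : V) :
    P ((N ^ (m + 1)) v) = (N ^ (m + 1)) (P v) + (m + 1 : ℂ) • (N ^ m) (H v - (m : ℂ) • v) := by
  induction m with
  | zero => simp [hP]
  | succ m ih =>
    rw [pow_succ', Module.End.mul_apply, hP, ih, comm_pow h]
    simp only [pow_succ' N m, Module.End.mul_apply, map_add, map_sub, map_smul]
    push_cast; module

theorem triple_shift {N H P : Module.End ℂ V} {W : ℤ → Submodule ℂ V}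
    (hW : IsMonodromyWeightFiltration N W)
    (h : ∀ v, H (N v) = N (H v) - (2 : ℂ) • N v) (hP : ∀ v, P (N v) = N (P v) + H v)
    (k : ℤ) (x : V) (hx : x ∈ W k) : H x - (k : ℂ) • x ∈ W (k - 1) := by
  have := mwf_ind hW (fun k => H - (k : ℂ) • (1 : Module.End ℂ V)) 1 (by
      intro k v
      simp only [LinearMap.sub_apply, LinearMap.smul_apply, Module.End.one_apply, h, map_sub,
        map_smul]
      push_cast; module) (by
      intro j a ha
      simp only [LinearMap.sub_apply, LinearMap.smul_apply, Module.End.one_apply, Int.cast_natCast]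
      have hj : (j + 1 : ℂ) ≠ 0 := Nat.cast_add_one_ne_zero j
      have h1 := comm_P_pow h hP j a
      rw [ha, map_zero] at h1
      have h2 : (N ^ j) (H a - (j : ℂ) • a + (j + 1 : ℂ)⁻¹ • N (P a)) = 0 := by
        rw [map_add, map_smul, ← Module.End.mul_apply, ← pow_succ]
        have : (j + 1 : ℂ)⁻¹ • ((N ^ (j + 1)) (P a) +
          (j + 1 : ℂ) • (N ^ j) (H a - (j : ℂ) • a)) = 0 := by rw [← h1, smul_zero]
        rw [smul_add, smul_smul, inv_mul_cancel₀ hj, one_smul] at this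
        rw [add_comm]; exact this
      have h3 : (N ^ (j + 1)) (H a - (j : ℂ) • a) = 0 := by
        have := comm_pow h (j + 1) a
        rw [ha, map_zero, smul_zero, sub_zero] at this
        rw [map_sub, map_smul, ha, ← this, smul_zero, sub_zero]
      have h4 : (N ^ (j + 2)) ((j + 1 : ℂ)⁻¹ • P a) = 0 := by
        have h5 : (N ^ (j + 1)) (H a - (j : ℂ) • a + (j + 1 : ℂ)⁻¹ • N (P a)) = 0 := by
          rw [pow_succ', Module.End.mul_apply, h2, map_zero]
        rw [map_add, h3, zero_add] at h5
        rw [pow_succ, Module.End.mul_apply, map_smul]; exact h5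
      have m1 := mwf_ker hW _ _ h2
      have m2 := mwf_one hW _ ((j : ℤ) - 1) (by push_cast; ring) _ (mwf_ker hW _ _ h4)
      rw [map_smul] at m2
      simpa using Submodule.sub_mem _ m1 m2) k x hx
  simpa using this

theorem grading_of_shift [FiniteDimensional ℂ V] {N H : Module.End ℂ V} {W : ℤ → Submodule ℂ V}
    (hW : IsMonodromyWeightFiltration N W)
    (h : ∀ k : ℤ, ∀ x ∈ W k, H x - (k : ℂ) • x ∈ W (k - 1)) : IsGrading H W := by
  obtain ⟨hm, ⟨d, hb, ht⟩, -⟩ := hW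
  have hpres : ∀ k, ∀ x ∈ W k, H x ∈ W k := by
    intro k x hx
    have := Submodule.add_mem _ (hm (by omega : k - 1 ≤ k) (h k x hx))
      (Submodule.smul_mem _ (k : ℂ) hx)
    simpa using this
  have hinf : ∀ k : ℤ, ∀ x, H x = (k : ℂ) • x → x ∈ W (k - 1) → x = 0 := by
    intro k x hx hxk
    have key : ∀ n : ℕ, x ∈ W (k - 1 - n) := by
      intro n
      induction n with
      | zero => simpa using hxk
      | succ n ih =>
        have h1 := h _ x ih
        rw [hx, ← sub_smul] at h1
        have h2 : ((k : ℂ) - ((k - 1 - n : ℤ) : ℂ)) ≠ 0 := by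
          have : ((k : ℂ) - ((k - 1 - n : ℤ) : ℂ)) = n + 1 := by push_cast; ring
          rw [this]; exact Nat.cast_add_one_ne_zero n
        have h3 := (Submodule.smul_mem_iff _ h2).1 h1
        convert h3 using 2; push_cast; ring
    have := key (k.natAbs + d)
    rw [hb _ (by omega)] at this
    exact (Submodule.mem_bot ℂ).1 this
  intro k
  constructor
  · apply le_antisymm
    · intro v hv
      let A : Module.End ℂ V := H - (k : ℂ) • (1 : Module.End ℂ V)
      have hA : ∀ x, A x = H x - (k : ℂ) • x := fun x => by simp [A]
      have hAW : ∀ x ∈ W (k - 1), A x ∈ W (k - 1) := fun x hx => by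
        rw [hA]; exact Submodule.sub_mem _ (hpres _ x hx) (Submodule.smul_mem _ _ hx)
      have hinj : Function.Injective (A.restrict hAW) := by
        rw [← LinearMap.ker_eq_bot, LinearMap.ker_eq_bot']
        rintro ⟨x, hx⟩ h0
        have h0' : A x = 0 := congrArg Subtype.val h0
        rw [hA, sub_eq_zero] at h0'
        exact Subtype.ext (hinf k x h0' hx)
      obtain ⟨⟨w, hw⟩, hw'⟩ := (LinearMap.injective_iff_surjective.1 hinj)
        ⟨H v - (k : ℂ) • v, h k v hv⟩
      have hw'' : A w = H v - (k : ℂ) • v := congrArg Subtype.val hw'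
      rw [hA] at hw''
      refine Submodule.mem_sup.2 ⟨v - w, ?_, w, hw, by abel⟩
      rw [Module.End.mem_eigenspace_iff, map_sub, smul_sub]
      rw [sub_eq_sub_iff_sub_eq_sub]; exact hw''.symm
    · refine sup_le ?_ (hm (by omega))
      intro x hx
      rw [Module.End.mem_eigenspace_iff] at hx
      have key : ∀ n : ℕ, x ∈ W (k + n) → x ∈ W k := by
        intro n
        induction n with
        | zero => intro h; simpa using h
        | succ n ih =>
          intro h'
          apply ih
          have h1 := h _ x h'
          rw [hx, ← sub_smul] at h1
          have h2 : ((k : ℂ) - ((k + (n + 1 : ℕ) : ℤ) : ℂ)) ≠ 0 := by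
            have : ((k : ℂ) - ((k + (n + 1 : ℕ) : ℤ) : ℂ)) = -(n + 1) := by push_cast; ring
            rw [this]; exact neg_ne_zero.2 (Nat.cast_add_one_ne_zero n)
          have h3 := (Submodule.smul_mem_iff _ h2).1 h1
          convert h3 using 2; push_cast; ring
      apply key (k.natAbs + d)
      rw [ht _ (by omega)]; trivial
  · rw [eq_bot_iff]
    rintro x ⟨h1, h2⟩
    exact (Submodule.mem_bot ℂ).2 (hinf k x (Module.End.mem_eigenspace_iff.1 h1) h2)

section grad
variable {N H : Module.End ℂ V} {W : ℤ → Submodule ℂ V}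

theorem grad_le (hG : IsGrading H W) (k : ℤ) (x : V) (hx : H x = (k : ℂ) • x) : x ∈ W k := by
  rw [(hG k).1]
  exact Submodule.mem_sup_left (Module.End.mem_eigenspace_iff.2 hx)

theorem grad_inf (hG : IsGrading H W) (k : ℤ) (x : V) (hx : H x = (k : ℂ) • x)
    (h : x ∈ W (k - 1)) : x = 0 := by
  have : x ∈ Module.End.eigenspace H (k : ℂ) ⊓ W (k - 1) :=
    ⟨Module.End.mem_eigenspace_iff.2 hx, h⟩
  rw [(hG k).2] at this
  exact (Submodule.mem_bot ℂ).1 this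

theorem grad_top (hW : IsMonodromyWeightFiltration N W) (hG : IsGrading H W) :
    ⨆ k : ℤ, Module.End.eigenspace H (k : ℂ) = ⊤ := by
  obtain ⟨hm, ⟨d, hb, ht⟩, -⟩ := hW
  have key : ∀ n : ℕ, W (-(d : ℤ) - 1 + n) ≤ ⨆ k : ℤ, Module.End.eigenspace H (k : ℂ) := by
    intro n
    induction n with
    | zero => rw [hb _ (by push_cast; omega)]; exact bot_le
    | succ n ih =>
      rw [(hG _).1]
      refine sup_le (le_iSup (fun k : ℤ => Module.End.eigenspace H (k : ℂ)) _) ?_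
      convert ih using 2; push_cast; ring
  have := key (2 * d + 1)
  rw [ht _ (by push_cast; omega)] at this
  exact top_le_iff.1 this

theorem grad_ext (hW : IsMonodromyWeightFiltration N W) (hG : IsGrading H W)
    {F G : Module.End ℂ V} (h : ∀ k : ℤ, ∀ v, H v = (k : ℂ) • v → F v = G v) : F = G := by
  have : (⨆ k : ℤ, Module.End.eigenspace H (k : ℂ)) ≤ LinearMap.eqLocus F G :=
    iSup_le fun k v hv => h k v (Module.End.mem_eigenspace_iff.1 hv)
  rw [grad_top hW hG] at this
  ext v
  exact this (Submodule.mem_top (x := v))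

theorem grad_lift (hW : IsMonodromyWeightFiltration N W) (hG : IsGrading H W)
    (f : ℤ → Module.End ℂ V) :
    ∃ F : Module.End ℂ V, ∀ k : ℤ, ∀ v, H v = (k : ℂ) • v → F v = f k v := by
  classical
  let E : ℤ → Submodule ℂ V := fun k => Module.End.eigenspace H (k : ℂ)
  have hI : DirectSum.IsInternal E :=
    DirectSum.isInternal_submodule_of_iSupIndep_of_iSup_eq_top
      ((Module.End.eigenspaces_iSupIndep H).comp Int.cast_injective) (grad_top hW hG)
  let e := LinearEquiv.ofBijective (DirectSum.coeLinearMap E) hI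
  refine ⟨(DirectSum.toModule ℂ ℤ V (fun k => (f k).comp (E k).subtype)).comp
    e.symm.toLinearMap, ?_⟩
  intro k v hv
  have hv' : v ∈ E k := Module.End.mem_eigenspace_iff.2 hv
  have : e.symm v = DirectSum.lof ℂ ℤ (fun k => E k) k ⟨v, hv'⟩ := by
    rw [LinearEquiv.symm_apply_eq]
    exact (DirectSum.coeLinearMap_lof E k ⟨v, hv'⟩).symm
  rw [LinearMap.comp_apply, LinearEquiv.coe_coe, this, DirectSum.toModule_lof]
  rfl

theorem comm_sub_inj (hW : IsMonodromyWeightFiltration N W) (hG : IsGrading H W)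
    {D : Module.End ℂ V} (hDN : ∀ v, D (N v) = N (D v))
    (hD : ∀ v, H (D v) = D (H v) + (2 : ℂ) • D v) : D = 0 := by
  have hpow : ∀ m : ℕ, ∀ v, D ((N ^ m) v) = (N ^ m) (D v) := by
    intro m
    induction m with
    | zero => simp
    | succ m ih => intro v; rw [pow_succ', Module.End.mul_apply, hDN, ih, Module.End.mul_apply]
  refine grad_ext hW hG fun k v hv => ?_
  have h1 := mwf_ind hW (fun _ => D) 0 (fun _ v => hDN v) (by
    intro k a ha
    have := mwf_ker hW (k + 1) (D a) (by rw [← hpow, ha, map_zero])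
    simpa using this) k v (grad_le hG k v hv)
  refine grad_inf hG (k + 2) _ ?_ (hW.1 (by push_cast; omega) h1)
  rw [hD, hv, map_smul]; push_cast; module

theorem exists_B (hW : IsMonodromyWeightFiltration N W) (hG : IsGrading H W)
    (h : ∀ v, H (N v) = N (H v) - (2 : ℂ) • N v) (k : ℕ) :
    ∃ B : Module.End ℂ V, (∀ v, H (B v) = B (H v) + (2 * k : ℂ) • B v) ∧
      ∀ j : ℤ, ∀ v, H v = (j : ℂ) • v → B ((N ^ k) v) - (N ^ k) (B v) =
        (if j = k then v else 0) - (if j = -k then v else 0) := by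
  have hNk : ∀ j : ℤ, ∀ v, H v = (j : ℂ) • v →
      H ((N ^ k) v) = ((j - 2 * k : ℤ) : ℂ) • (N ^ k) v := by
    intro j v hv
    rw [comm_pow h, hv, map_smul]; push_cast; module
  let E := Module.End.eigenspace H ((k : ℤ) : ℂ)
  obtain ⟨g, hg⟩ := LinearMap.exists_leftInverse_of_injective ((N ^ k).comp E.subtype) (by
    rw [LinearMap.ker_eq_bot']
    rintro ⟨x, hx⟩ h0
    have h0' : (N ^ k) x = 0 := h0
    have hx' := Module.End.mem_eigenspace_iff.1 hx
    refine Subtype.ext (grad_inf hG k x hx' (hW.2.2.2.1 k x (grad_le hG _ x hx') ?_))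
    rw [h0']; exact Submodule.zero_mem _)
  have hg' : ∀ v, H v = ((k : ℤ) : ℂ) • v → (g ((N ^ k) v) : V) = v := by
    intro v hv
    exact congrArg Subtype.val (LinearMap.congr_fun hg ⟨v, Module.End.mem_eigenspace_iff.2 hv⟩)
  have hsurj : ∀ v, H v = ((-(k : ℤ) : ℤ) : ℂ) • v →
      ∃ u, H u = ((k : ℤ) : ℂ) • u ∧ (N ^ k) u = v := by
    intro v hv
    obtain ⟨u, hu, rfl⟩ := mwf_neg hW k v (grad_le hG _ v hv)
    rw [(hG k).1] at hu
    obtain ⟨e, he, w, hw, rfl⟩ := Submodule.mem_sup.1 hu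
    rw [Module.End.mem_eigenspace_iff] at he
    refine ⟨e, he, ?_⟩
    have hw0 : (N ^ k) w = 0 := by
      refine grad_inf hG (-(k : ℤ)) _ ?_ (mwf_pow hW k _ _ (by ring) w hw)
      have h1 := hNk _ e he
      rw [map_add, map_add, h1, smul_add] at hv
      have h2 : ((k : ℤ) - 2 * k : ℤ) = -(k : ℤ) := by ring
      rw [h2] at hv
      exact add_left_cancel hv
    rw [map_add, hw0, add_zero]
  obtain ⟨B, hB⟩ := grad_lift hW hG (fun j => if j = -(k : ℤ) then E.subtype.comp g else 0)
  have hB1 : ∀ v, H v = ((-(k : ℤ) : ℤ) : ℂ) • v → B v = g v := by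
    intro v hv; rw [hB _ v hv]; simp
  have hB0 : ∀ j : ℤ, j ≠ -(k : ℤ) → ∀ v, H v = (j : ℂ) • v → B v = 0 := by
    intro j hj v hv; rw [hB _ v hv]; simp [hj]
  refine ⟨B, ?_, ?_⟩
  · have : H * B = B * H + (2 * k : ℂ) • B := by
      refine grad_ext hW hG fun j v hv => ?_
      simp only [Module.End.mul_apply, LinearMap.add_apply, LinearMap.smul_apply, hv, map_smul]
      by_cases hj : j = -(k : ℤ)
      · subst hj
        rw [hB1 v hv, Module.End.mem_eigenspace_iff.1 (g v).2]
        push_cast; module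
      · rw [hB0 j hj v hv]; simp
    intro v
    exact LinearMap.congr_fun this v
  · intro j v hv
    congr 1
    · split_ifs with hj
      · subst hj
        rw [hB1 _ (by rw [hNk _ v hv]; congr 2; ring), hg' v hv]
      · exact hB0 _ (by omega) _ (hNk _ v hv)
    · split_ifs with hj
      · subst hj
        obtain ⟨u, hu, rfl⟩ := hsurj v hv
        rw [hB1 _ hv, hg' u hu]
      · rw [hB0 j hj v hv, map_zero]

theorem exists_P (hW : IsMonodromyWeightFiltration N W) (hG : IsGrading H W)
    (hHN : H * N - N * H = (-2 : ℂ) • N) :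
    ∃ P : Module.End ℂ V, H * P - P * H = (2 : ℂ) • P ∧ P * N - N * P = H := by
  have h : ∀ v, H (N v) = N (H v) - (2 : ℂ) • N v := by
    intro v
    have := LinearMap.congr_fun hHN v
    simp only [LinearMap.sub_apply, Module.End.mul_apply, LinearMap.smul_apply] at this
    rw [sub_eq_iff_eq_add] at this
    rw [this]; module
  choose B hB1 hB2 using exists_B hW hG h
  have step : ∀ k : ℕ, ∃ P : Module.End ℂ V, H * P - P * H = (2 : ℂ) • P ∧
      P * N - N * P = B k * N ^ k - N ^ k * B k := by
    intro k
    refine ⟨∑ i ∈ Finset.range k, N ^ i * B k * N ^ (k - 1 - i), ?_, ?_⟩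
    · rw [Finset.mul_sum, Finset.sum_mul, ← Finset.sum_sub_distrib, Finset.smul_sum]
      refine Finset.sum_congr rfl fun i hi => ?_
      rw [Finset.mem_range] at hi
      ext v
      simp only [LinearMap.sub_apply, Module.End.mul_apply, LinearMap.smul_apply]
      rw [comm_pow h, hB1, comm_pow h]
      simp only [map_add, map_sub, map_smul]
      have : ((k - 1 - i : ℕ) : ℂ) = k - 1 - i := by
        rw [Nat.cast_sub (by omega), Nat.cast_sub (by omega)]; simp
      rw [this]; module
    · rw [Finset.sum_mul, Finset.mul_sum, ← Finset.sum_sub_distrib]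
      have := Finset.sum_range_sub' (fun i => N ^ i * B k * N ^ (k - i)) k
      simp only [pow_zero, one_mul, Nat.sub_zero, Nat.sub_self, mul_one] at this
      rw [← this]
      refine Finset.sum_congr rfl fun i hi => ?_
      rw [Finset.mem_range] at hi
      rw [show k - i = (k - 1 - i) + 1 by omega, show k - (i + 1) = k - 1 - i by omega,
        pow_succ, pow_succ' N i]
      simp only [mul_assoc]
  choose P hP1 hP2 using step
  obtain ⟨d, hb, ht⟩ := hW.2.1
  refine ⟨∑ k ∈ Finset.range (d + 1), (k : ℂ) • P k, ?_, ?_⟩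
  · rw [Finset.mul_sum, Finset.sum_mul, ← Finset.sum_sub_distrib, Finset.smul_sum]
    refine Finset.sum_congr rfl fun k _ => ?_
    rw [mul_smul_comm, smul_mul_assoc, ← smul_sub, hP1, smul_comm]
  · rw [Finset.sum_mul, Finset.mul_sum, ← Finset.sum_sub_distrib]
    have : ∀ k ∈ Finset.range (d + 1), (k : ℂ) • P k * N - N * (k : ℂ) • P k =
        (k : ℂ) • (B k * N ^ k - N ^ k * B k) := by
      intro k _
      rw [mul_smul_comm, smul_mul_assoc, ← smul_sub, hP2]
    rw [Finset.sum_congr rfl this]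
    refine grad_ext hW hG fun j v hv => ?_
    by_cases hv0 : v = 0
    · simp [hv0]
    have hj1 : j ≤ d := by
      by_contra hc
      exact hv0 (grad_inf hG j v hv (by rw [ht _ (by omega)]; trivial))
    have hj2 : -(d : ℤ) ≤ j := by
      by_contra hc
      have := grad_le hG j v hv
      rw [hb _ (by omega)] at this
      exact hv0 ((Submodule.mem_bot ℂ).1 this)
    rw [LinearMap.sum_apply]
    simp only [LinearMap.smul_apply, LinearMap.sub_apply, Module.End.mul_apply, hB2 _ j v hv, hv]
    rw [Finset.sum_eq_single j.natAbs]
    · rcases lt_trichotomy j 0 with hj | hj | hj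
      · obtain ⟨m, rfl⟩ : ∃ m : ℕ, j = -(m : ℤ) := ⟨j.natAbs, by omega⟩
        rw [if_neg (by omega), if_pos (by omega)]
        simp
      · subst hj; simp
      · obtain ⟨m, rfl⟩ : ∃ m : ℕ, j = (m : ℤ) := ⟨j.natAbs, by omega⟩
        rw [if_pos (by omega), if_neg (by omega)]
        simp
    · intro b _ hbj
      rw [if_neg (by omega), if_neg (by omega)]; simp
    · intro hc
      exact absurd (Finset.mem_range.2 (by omega)) hc

end grad

/-- Bijective correspondence between gradings `H` of the monodromy weight filtration
`W(N)` with `[H, N] = -2N` and sl₂(ℂ)-representations `ρ` with `ρ(n₋) = N`.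
A representation with `ρ(n₋) = N` is encoded by the pair `p = (ρ(y), ρ(n₊))`
subject to the standard commutator relations, and the bijection sends `ρ` to
`H = ρ(y) = p.1`. -/
theorem gradings_biject_with_sl2_reps
    [FiniteDimensional ℂ V] (N : Module.End ℂ V)
    (hnil : IsNilpotent N) (hne : N ≠ 0)
    (W : ℤ → Submodule ℂ V) (hW : IsMonodromyWeightFiltration N W) :
    Set.BijOn (fun p : Module.End ℂ V × Module.End ℂ V => p.1)
      {p | ⁅p.1, p.2⁆ = (2 : ℂ) • p.2 ∧ ⁅p.1, N⁆ = (-2 : ℂ) • N ∧ ⁅p.2, N⁆ = p.1}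
      {H | IsGrading H W ∧ ⁅H, N⁆ = (-2 : ℂ) • N} := by
  have app : ∀ {A B : Module.End ℂ V} {c : ℂ} {C : Module.End ℂ V}, ⁅A, B⁆ = c • C →
      ∀ v, A (B v) = B (A v) + c • C v := by
    intro A B c C hh v
    have := LinearMap.congr_fun hh v
    rw [Ring.lie_def] at this
    simp only [LinearMap.sub_apply, Module.End.mul_apply, LinearMap.smul_apply] at this
    rw [sub_eq_iff_eq_add] at this
    rw [this, add_comm]
  have maps : ∀ p : Module.End ℂ V × Module.End ℂ V, ⁅p.1, p.2⁆ = (2 : ℂ) • p.2 ∧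
      ⁅p.1, N⁆ = (-2 : ℂ) • N ∧ ⁅p.2, N⁆ = p.1 → IsGrading p.1 W := by
    rintro ⟨H, P⟩ ⟨h1, h2, h3⟩
    dsimp only at h1 h2 h3 ⊢
    refine grading_of_shift hW (triple_shift (P := P) hW ?_ ?_)
    · intro v
      rw [app h2]; module
    · intro v
      have := app (c := 1) (C := H) (by rw [h3, one_smul]) v
      rw [this, one_smul]
  refine ⟨fun p hp => ⟨maps p hp, hp.2.1⟩, ?_, ?_⟩
  · rintro ⟨H, P⟩ hp ⟨H', P'⟩ hp' (rfl : H = H')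
    have hG := maps _ hp
    obtain ⟨h1, h2, h3⟩ := hp
    obtain ⟨h1', h2', h3'⟩ := hp'
    dsimp only at *
    have : P - P' = 0 := by
      refine comm_sub_inj hW hG ?_ ?_
      · intro v
        have e1 := app (c := 1) (C := H) (by rw [h3, one_smul]) v
        have e2 := app (c := 1) (C := H) (by rw [h3', one_smul]) v
        rw [LinearMap.sub_apply, LinearMap.sub_apply, map_sub, e1, e2]; abel
      · intro v
        have e1 := app h1 v
        have e2 := app h1' v
        simp only [LinearMap.sub_apply, map_sub, e1, e2]; module
    rw [sub_eq_zero.1 this]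
  · rintro H ⟨hG, hHN⟩
    obtain ⟨P, hP1, hP2⟩ := exists_P hW hG (by rw [← Ring.lie_def]; exact hHN)
    exact ⟨(H, P), ⟨by rw [Ring.lie_def]; exact hP1, hHN, by rw [Ring.lie_def]; exact hP2⟩, rfl⟩
end
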